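/- Both [Inf G Mon Bc] and [Inf G Mon^d Bc] are proper subsets of [Inf G Bc]. -/

import Mathlib

open Filter Classical

namespace InfBc

/-! ### Basic notions: r.e. sets, informants, learners -/

/-- The `e`-th recursively enumerable set (via an acceptable numbering of
partial computable functions, `W e = dom φ_e`). -/
def W (e : ℕ) : Set ℕ := {x | ((Denumerable.ofNat Nat.Partrec.Code e).eval x).Dom}

/-- A language is recursively enumerable. -/
def RE (L : Set ℕ) : Prop := ∃ e, W e = L

abbrev Datum := ℕ × Bool
abbrev Seq := List Datum
abbrev Informant := ℕ → Datum
abbrev HypSeq := ℕ → Part ℕ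
/-- Learners are partial functions; all input types are coded into `ℕ`. -/
abbrev Learner := ℕ →. ℕ
abbrev Restriction := HypSeq → Informant → Prop

/-- Positive information of an infinite sequence. -/
def posI (I : Informant) : Set ℕ := {x | ∃ n, I n = (x, true)}
/-- Negative information of an infinite sequence. -/
def negI (I : Informant) : Set ℕ := {x | ∃ n, I n = (x, false)}

/-- `I` is an informant for the language `L`. -/
def IsInformant (I : Informant) (L : Set ℕ) : Prop := posI I = L ∧ negI I = Lᶜ

/-- `I` is an informant (for some language), i.e. `I ∈ Inf`. -/
def IsInf (I : Informant) : Prop := IsInformant I (posI I)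

/-- `I` is a canonical informant. -/
def Canonical (I : Informant) : Prop := ∀ x, I x = (x, true) ∨ I x = (x, false)

/-- `I[n]`, the length-`n` initial segment of `I`. -/
def segment (I : Informant) (n : ℕ) : Seq := (List.range n).map I

/-- Positive information of a finite sequence. -/
def posS (σ : Seq) : Set ℕ := {x | (x, true) ∈ σ}
/-- Negative information of a finite sequence. -/
def negS (σ : Seq) : Set ℕ := {x | (x, false) ∈ σ}
/-- The content of a finite sequence, as a set. -/
def contentS (σ : Seq) : Set Datum := {a | a ∈ σ}

/-! ### Interaction operators -/

abbrev InteractionOperator := Learner → Informant → HypSeq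

/-- Full-information (Gold-style) interaction: `G(h,I)(i) = h(I[i])`. -/
def Gop : InteractionOperator := fun h I i => h (Encodable.encode (segment I i))

/-- Set-driven interaction: `Sd(h,I)(i) = h(content(I[i]))`. -/
def Sdop : InteractionOperator := fun h I i => h (Encodable.encode (segment I i).toFinset)

/-- The iterated evaluation of an iterative learner on a finite sequence:
start with the initial hypothesis `h(none)` and feed the data one by one. -/
def iterExtend (h : Learner) (σ : Seq) : Part ℕ :=
  σ.foldl (fun pe a => pe.bind fun e => h (Encodable.encode (some (e, a))))
    (h (Encodable.encode (none : Option (ℕ × Datum))))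

/-- Iterative interaction: `It(h,I)(i)` is obtained by feeding `I[i]` one datum
at a time, each time updating the previous hypothesis. -/
def Itop : InteractionOperator := fun h I i => iterExtend h (segment I i)

/-- An iterative learner is confluent if the order and multiplicity in which
the content is presented does not matter. -/
def ConfluentLearner (h : Learner) : Prop :=
  ∀ σ τ : Seq, contentS σ = contentS τ → iterExtend h σ = iterExtend h τ

/-- Confluently iterative interaction. -/
noncomputable def CflItop : InteractionOperator := fun h I i =>
  if ConfluentLearner h then iterExtend h (segment I i) else Part.none

/-- `β ≼ β'`: every (partial computable) `β`-learner can be translated into a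
`β'`-learner with the same hypothesis sequence on every informant. -/
def OpLe (β β' : InteractionOperator) : Prop :=
  ∀ h : Learner, Partrec h → ∃ h' : Learner, Partrec h' ∧
    ∀ I : Informant, IsInf I → ∀ n, β h I n = β' h' I n

/-! ### Learning restrictions -/

/-- The trivial restriction `T`. -/
def TT : Restriction := fun _ _ => True

/-- Explanatory identification. -/
def Ex : Restriction := fun p I =>
  ∃ q, W q = posI I ∧ ∀ᶠ n in atTop, p n = Part.some q

/-- Behaviorally correct identification. -/
def Bc : Restriction := fun p I => ∀ᶠ n in atTop, ∃ e ∈ p n, W e = posI I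

/-- Consistency of a hypothesis with a finite sequence of data. -/
def ConsH (e : ℕ) (σ : Seq) : Prop := posS σ ⊆ W e ∧ negS σ ∩ W e = ∅

/-- Consistency of a hypothesis sequence with an informant. -/
def Cons : Restriction := fun p I => ∀ n, ∃ e ∈ p n, ConsH e (segment I n)

/-- Strongly monotone. -/
def SMon : Restriction := fun p _ =>
  ∀ s t, s ≤ t → ∀ e ∈ p s, ∀ e' ∈ p t, W e ⊆ W e'

/-- Dual strongly monotone. -/
def SMond : Restriction := fun p _ =>
  ∀ s t, s ≤ t → ∀ e ∈ p s, ∀ e' ∈ p t, W e' ⊆ W e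

/-- Monotone. -/
def Mon : Restriction := fun p I =>
  ∀ s t, s ≤ t → ∀ e ∈ p s, ∀ e' ∈ p t, W e ∩ posI I ⊆ W e' ∩ posI I

/-- Dual monotone. -/
def Mond : Restriction := fun p I =>
  ∀ s t, s ≤ t → ∀ e ∈ p s, ∀ e' ∈ p t, (W e)ᶜ ∩ negI I ⊆ (W e')ᶜ ∩ negI I

/-- Weakly monotone. -/
def WMon : Restriction := fun p I =>
  ∀ s t, s ≤ t → ∀ e ∈ p s, ConsH e (segment I t) → ∀ e' ∈ p t, W e ⊆ W e'

/-- Dual weakly monotone. -/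
def WMond : Restriction := fun p I =>
  ∀ s t, s ≤ t → ∀ e ∈ p s, ConsH e (segment I t) → ∀ e' ∈ p t, W e' ⊆ W e

/-- Cautious. -/
def Caut : Restriction := fun p _ =>
  ∀ s t, s < t → ∀ e ∈ p s, ∀ e' ∈ p t, ¬ W e' ⊂ W e

/-- Target cautious. -/
def CautTar : Restriction := fun p I =>
  ∀ s, ∀ e ∈ p s, ¬ posI I ⊂ W e

/-- Finitely cautious. -/
def CautFin : Restriction := fun p _ =>
  ∀ s t, s < t → ∀ e ∈ p s, ∀ e' ∈ p t, W e' ⊂ W e → (W e').Infinite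

/-- Infinitely cautious. -/
def CautInf : Restriction := fun p _ =>
  ∀ s t, s < t → ∀ e ∈ p s, ∀ e' ∈ p t, W e' ⊂ W e → (W e').Finite

/-! ### Learnability -/

/-- The class of admissible learners: all partial computable learners. -/
def AllL : Learner → Prop := fun _ => True
/-- The class of admissible learners: total computable learners (`ℛ`). -/
def TotalL : Learner → Prop := fun h => ∀ x, (h x).Dom
/-- Admissible informants: all informants (`Inf`). -/
def AllI : Informant → Prop := fun _ => True

/-- `h` learns `L` in the setting given by admissible informants `P`,
interaction operator `β` and local restriction `δ`. -/
def LearnsWith (P : Informant → Prop) (β : InteractionOperator) (δ : Restriction)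
    (h : Learner) (L : Set ℕ) : Prop :=
  RE L ∧ ∀ I : Informant, P I → IsInformant I L → δ (β h I) I

/-- `[τ(α) C P β δ]`: the collection of all classes of languages learnable by
some learner in `C` that satisfies the global restriction `α` on all admissible
informants, under interaction operator `β` and local restriction `δ`. -/
def Learnable (α : Restriction) (C : Learner → Prop) (P : Informant → Prop)
    (β : InteractionOperator) (δ : Restriction) : Set (Set (Set ℕ)) :=
  {𝓛 | ∃ h : Learner, Partrec h ∧ C h ∧
        (∀ I : Informant, IsInf I → P I → α (β h I) I) ∧
        ∀ L ∈ 𝓛, LearnsWith P β δ h L}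

/-! ### Properties of restrictions -/

/-- A learning restriction is delayable if it is preserved under postponing
hypotheses along a non-decreasing unbounded function. -/
def Delayable (δ : Restriction) : Prop :=
  ∀ I I' : Informant, IsInf I → IsInf I' → Set.range I = Set.range I' →
    ∀ (p : HypSeq) (s : ℕ → ℕ), Monotone s → (∀ m, ∃ n, m ≤ s n) →
      δ p I → (∀ n, contentS (segment I (s n)) ⊆ contentS (segment I' n)) →
      δ (fun n => p (s n)) I'

/-- A learning restriction is semantic if it is indifferent to replacing the
hypothesis sequence by a semantically equivalent one. -/
def Semantic (δ : Restriction) : Prop :=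
  ∀ (p p' : HypSeq) (I : Informant), δ p I →
    (∀ i, (p i).Dom ↔ (p' i).Dom) →
    (∀ i, ∀ e ∈ p i, ∀ e' ∈ p' i, W e = W e') →
    δ p' I


/-! ### Auxiliary material for the proof -/

/-- Nearest-neighbour prediction: label of the largest observed `y ≤ x`. -/
def guess (σ : Seq) (x : ℕ) : Bool :=
  Nat.rec (decide ((0, true) ∈ σ))
    (fun y b => if (y + 1, true) ∈ σ then true else if (y + 1, false) ∈ σ then false else b) x

theorem primrecPred_mem {α : Type*} [Primcodable α] {f : α → Datum} {g : α → Seq}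
    (hf : Primrec f) (hg : Primrec g) : PrimrecPred (fun a => f a ∈ g a) := by
  have h : PrimrecRel (fun (l : Seq) (d : Datum) => ∃ a ∈ l, a = d) :=
    PrimrecRel.exists_mem_list (R := fun a d : Datum => a = d) Primrec.eq
  have h2 := PrimrecRel.comp h hg hf
  refine h2.of_eq (fun a => ?_)
  simp

theorem guess_primrec : Primrec₂ guess := by
  have h0 : Primrec (fun σ : Seq => decide (((0 : ℕ), true) ∈ σ)) := by
    refine (Primrec.ite (primrecPred_mem (Primrec.const (0, true)) Primrec.id)
      (Primrec.const true) (Primrec.const false)).of_eq (fun σ => ?_)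
    by_cases h : ((0 : ℕ), true) ∈ σ <;> simp [h]
  have hs : Primrec₂ (fun (σ : Seq) (p : ℕ × Bool) =>
      if (p.1 + 1, true) ∈ σ then true else if (p.1 + 1, false) ∈ σ then false else p.2) := by
    have hm : ∀ b : Bool, PrimrecPred (fun q : Seq × (ℕ × Bool) => (q.2.1 + 1, b) ∈ q.1) := by
      intro b
      exact primrecPred_mem
        (Primrec.pair (Primrec.succ.comp (Primrec.fst.comp Primrec.snd)) (Primrec.const b))
        Primrec.fst
    have h3 := Primrec.ite (hm true) (Primrec.const true)
      (Primrec.ite (hm false) (Primrec.const false) (Primrec.snd.comp Primrec.snd))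
    show Primrec (fun q : Seq × (ℕ × Bool) => if (q.2.1 + 1, true) ∈ q.1 then true
      else if (q.2.1 + 1, false) ∈ q.1 then false else q.2.2)
    refine h3.of_eq (fun q => ?_)
    congr
  exact Primrec.nat_rec h0 hs

/-- A code whose curryings have the predicted sets as domains. -/
theorem exists_guess_code : ∃ c : Nat.Partrec.Code, ∀ (σ : Seq) (x : ℕ),
    (c.eval (Nat.pair (Encodable.encode σ) x)).Dom ↔ guess σ x = true := by
  have hg : Computable (fun q : Seq × ℕ => guess q.1 q.2) := Primrec.to_comp guess_primrec
  have hp : Partrec (fun q : Seq × ℕ => cond (guess q.1 q.2) (Part.some 0 : Part ℕ) Part.none) :=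
    Partrec.cond hg (Computable.const 0).partrec Partrec.none
  obtain ⟨c, hc⟩ := Nat.Partrec.Code.exists_code.1 hp
  refine ⟨c, fun σ x => ?_⟩
  have hd : Encodable.decode (α := Seq × ℕ) (Nat.pair (Encodable.encode σ) x) = some (σ, x) := by
    simp
  rw [hc]
  simp only [hd]
  cases hgx : guess σ x <;> simp [hgx]

/-- Sets that are constant from some point on. -/
def EvConst : Set (Set ℕ) := {L | ∃ k, ∀ x, k ≤ x → (x ∈ L ↔ k ∈ L)}

/-- The canonical informant. -/
noncomputable def can (L : Set ℕ) : Informant := fun x => (x, decide (x ∈ L))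

theorem can_isInformant (L : Set ℕ) : IsInformant (can L) L := by
  constructor
  · ext x
    simp [posI, can]
  · ext x
    simp [negI, can]

theorem segment_can_congr {L L' : Set ℕ} {n : ℕ} (h : ∀ x < n, (x ∈ L ↔ x ∈ L')) :
    segment (can L) n = segment (can L') n := by
  unfold segment
  apply List.map_congr_left
  intro x hx
  simp [can, h x (List.mem_range.1 hx)]

theorem guess_correct {σ : Seq} {L : Set ℕ} {k : ℕ} (hk : ∀ x, k ≤ x → (x ∈ L ↔ k ∈ L))
    (hpos : ∀ x, (x, true) ∈ σ → x ∈ L) (hneg : ∀ x, (x, false) ∈ σ → x ∉ L)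
    (hall : ∀ x ≤ k, (x, true) ∈ σ ∨ (x, false) ∈ σ) (x : ℕ) :
    guess σ x = true ↔ x ∈ L := by
  induction x with
  | zero =>
    show decide _ = true ↔ _
    rw [decide_eq_true_iff]
    refine ⟨hpos 0, fun h => ?_⟩
    rcases hall 0 (Nat.zero_le _) with h1 | h1
    · exact h1
    · exact absurd h (hneg 0 h1)
  | succ y ih =>
    have e : guess σ (y + 1) = if (y + 1, true) ∈ σ then true
      else if (y + 1, false) ∈ σ then false else guess σ y := by
        rfl
    rw [e]
    by_cases h1 : (y + 1, true) ∈ σ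
    · simp [h1, hpos _ h1]
    · by_cases h2 : (y + 1, false) ∈ σ
      · simp [h1, h2, hneg _ h2]
      · have hy : k ≤ y := by
          by_contra hlt
          rcases hall (y + 1) (by omega) with h | h
          · exact h1 h
          · exact h2 h
        rw [if_neg h1, if_neg h2, ih, hk y hy, hk (y + 1) (by omega)]

theorem mem_segment {I : Informant} {n : ℕ} {d : Datum} :
    d ∈ segment I n ↔ ∃ i < n, I i = d := by
  simp [segment]

theorem segment_eventually {I : Informant} {L : Set ℕ} (hI : IsInformant I L) (k : ℕ) :
    ∀ᶠ n in atTop, ∀ x ≤ k, (x, true) ∈ segment I n ∨ (x, false) ∈ segment I n := by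
  have h : ∀ x, ∃ i b, I i = (x, b) := by
    intro x
    by_cases hx : x ∈ L
    · rw [← hI.1] at hx
      obtain ⟨i, hi⟩ := hx
      exact ⟨i, true, hi⟩
    · have hx' : x ∈ Lᶜ := hx
      rw [← hI.2] at hx'
      obtain ⟨i, hi⟩ := hx'
      exact ⟨i, false, hi⟩
  have h2 : ∀ᶠ n in atTop, ∀ x ∈ Set.Iic k,
      ((x, true) ∈ segment I n ∨ (x, false) ∈ segment I n) := by
    rw [Filter.eventually_all_finite (Set.finite_Iic k)]
    intro x _
    obtain ⟨i, b, hi⟩ := h x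
    filter_upwards [eventually_gt_atTop i] with n hn
    cases b
    · exact Or.inr (mem_segment.2 ⟨i, hn, hi⟩)
    · exact Or.inl (mem_segment.2 ⟨i, hn, hi⟩)
  exact h2

theorem evConst_bc : EvConst ∈ Learnable TT AllL AllI Gop Bc := by
  obtain ⟨c, hc⟩ := exists_guess_code
  have hW : ∀ σ : Seq, W (Encodable.encode (c.curry (Encodable.encode σ)))
      = {x | guess σ x = true} := by
    intro σ
    ext x
    simp only [W, Set.mem_ofPred_eq, Denumerable.ofNat_encode, Nat.Partrec.Code.eval_curry]
    exact hc σ x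
  have hcomp : Computable (fun n : ℕ => Encodable.encode (c.curry n)) :=
    (Primrec.encode.comp
      (Nat.Partrec.Code.primrec₂_curry.comp (Primrec.const c) Primrec.id)).to_comp
  have hbc : ∀ L ∈ EvConst, ∀ I, IsInformant I L →
      Bc (Gop (fun n => Part.some (Encodable.encode (c.curry n))) I) I := by
    rintro L ⟨k, hk⟩ I hI
    filter_upwards [segment_eventually hI k] with n hn
    refine ⟨_, Part.mem_some _, ?_⟩
    rw [hW, hI.1]
    ext x
    refine guess_correct hk ?_ ?_ hn x
    · intro y hy
      obtain ⟨i, _, hi⟩ := mem_segment.1 hy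
      rw [← hI.1]
      exact ⟨i, hi⟩
    · intro y hy
      obtain ⟨i, _, hi⟩ := mem_segment.1 hy
      have : y ∈ Lᶜ := by
        rw [← hI.2]
        exact ⟨i, hi⟩
      exact this
  refine ⟨_, hcomp.partrec, trivial, fun _ _ _ => trivial, fun L hL => ⟨?_, fun I _ hI =>
    hbc L hL I hI⟩⟩
  obtain ⟨n, e, _, he⟩ := (hbc L hL (can L) (can_isInformant L)).exists
  exact ⟨e, he.trans (can_isInformant L).1⟩

/-- Bc on the canonical informant for `L`, at an arbitrarily late stage. -/
theorem bc_late {h : Learner} {L : Set ℕ} (hb : Bc (Gop h (can L)) (can L)) (n : ℕ) :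
    ∃ m, n ≤ m ∧ ∃ e ∈ h (Encodable.encode (segment (can L) m)), W e = L := by
  obtain ⟨m, ⟨e, he, hW⟩, hm⟩ := (hb.and (eventually_ge_atTop n)).exists
  exact ⟨m, hm, e, he, hW.trans (can_isInformant L).1⟩

theorem evConst_not_mon :
    EvConst ∉ Learnable TT AllL AllI Gop (fun p I => Mon p I ∧ Bc p I) := by
  rintro ⟨h, _, _, _, hl⟩
  have key : ∀ L ∈ EvConst, Mon (Gop h (can L)) (can L) ∧ Bc (Gop h (can L)) (can L) :=
    fun L hL => (hl L hL).2 _ trivial (can_isInformant L)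
  obtain ⟨N, _, e, he, hWe⟩ := bc_late (key Set.univ ⟨0, by simp⟩).2 0
  obtain ⟨M, hNM, e', he', hWe'⟩ := bc_late (key {x | x < N} ⟨N, by simp⟩).2 N
  have hm := (key {x | x < N ∨ M ≤ x} ⟨M, fun x hx => by simp [hx]⟩).1
  have hs1 : segment (can Set.univ) N = segment (can {x | x < N ∨ M ≤ x}) N :=
    segment_can_congr (fun x hx => by simp [hx])
  have hs2 : segment (can {x | x < N}) M = segment (can {x | x < N ∨ M ≤ x}) M :=
    segment_can_congr (fun x hx => by simp [hx])
  rw [hs1] at he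
  rw [hs2] at he'
  have hsub := hm N M hNM e he e' he'
  have hM : M ∈ W e ∩ posI (can {x | x < N ∨ M ≤ x}) := by
    rw [hWe, (can_isInformant _).1]
    simp
  have := (hsub hM).1
  rw [hWe'] at this
  exact absurd this (not_lt.2 hNM)

theorem evConst_not_mond :
    EvConst ∉ Learnable TT AllL AllI Gop (fun p I => Mond p I ∧ Bc p I) := by
  rintro ⟨h, _, _, _, hl⟩
  have key : ∀ L ∈ EvConst, Mond (Gop h (can L)) (can L) ∧ Bc (Gop h (can L)) (can L) :=
    fun L hL => (hl L hL).2 _ trivial (can_isInformant L)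
  obtain ⟨N, _, e, he, hWe⟩ := bc_late (key ∅ ⟨0, by simp⟩).2 0
  obtain ⟨M, hNM, e', he', hWe'⟩ := bc_late (key {x | N ≤ x} ⟨N, by simp⟩).2 N
  have hm := (key {x | N ≤ x ∧ x < M} ⟨M, fun x hx => by simp [hx]⟩).1
  have hs1 : segment (can ∅) N = segment (can {x | N ≤ x ∧ x < M}) N :=
    segment_can_congr (fun x hx => by simp [hx])
  have hs2 : segment (can {x | N ≤ x}) M = segment (can {x | N ≤ x ∧ x < M}) M :=
    segment_can_congr (fun x hx => by simp [hx])
  rw [hs1] at he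
  rw [hs2] at he'
  have hsub := hm N M hNM e he e' he'
  have hM : M ∈ (W e)ᶜ ∩ negI (can {x | N ≤ x ∧ x < M}) := by
    rw [hWe, (can_isInformant _).2]
    simp
  have := (hsub hM).1
  rw [hWe'] at this
  exact this hNM

theorem learnable_mono {δ δ' : Restriction} (h : ∀ p I, δ p I → δ' p I) :
    Learnable TT AllL AllI Gop δ ⊆ Learnable TT AllL AllI Gop δ' := by
  rintro 𝓛 ⟨g, h1, h2, h3, h4⟩
  exact ⟨g, h1, h2, h3, fun L hL => ⟨(h4 L hL).1, fun I hP hI => h _ _ ((h4 L hL).2 I hP hI)⟩⟩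

/-- Both `[Inf G Mon Bc]` and `[Inf G Mon^d Bc]` are proper
subsets of `[Inf G Bc]`. -/
theorem mon_and_dual_mon_proper_subsets_of_bc :
    Learnable TT AllL AllI Gop (fun p I => Mon p I ∧ Bc p I) ⊂
      Learnable TT AllL AllI Gop Bc ∧
    Learnable TT AllL AllI Gop (fun p I => Mond p I ∧ Bc p I) ⊂
      Learnable TT AllL AllI Gop Bc := by
  exact ⟨⟨learnable_mono fun _ _ h => h.2, fun h => evConst_not_mon (h evConst_bc)⟩,
    ⟨learnable_mono fun _ _ h => h.2, fun h => evConst_not_mond (h evConst_bc)⟩⟩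

end InfBc
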